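/- Let (A_{a_i} b_i)_{i=1}^n be the k-sandwiching sequence of some m > 0, with sandwiching values (m_i)_{i=0}^n. Then for every i with 1 ≤ i < n: (1) b_{i+1} < min{ A_{a_{i+1}}^{k−1}(A_{a_{i+1}+1}(m_i − 1)), A_{a_i − 1}^{k−1}(m_i) }; (2) A_{a_{i+1}}(b_{i+1} + 1) ≤ A_{a_{i+1}+1}(m_i); (3) A_{a_{i+1}}(b_{i+1} + 1) ≤ A_{a_i}(b_i + 1). -/

import Mathlib

/-- The base-`k` Ackermann function `A_a(k, b)`:
`A_0(k, b) = k ^ b` and `A_{a+1}(k, b) = A_a^k(k, A_{a+1}(k, b-1))`,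
with the auxiliary value `A_{a+1}(k, -1) = 1`
(equivalently, `A_{a+1}(k, b) = (A_a^k)^[b+1] (1)`). -/
def Ack (k : ℕ) : ℕ → ℕ → ℕ
  | 0, b => k ^ b
  | a + 1, b => ((Ack k a)^[k])^[b + 1] 1

/-- `IsSandwich k m n a b ms` says that `(A_{a i}(k, b i))_{i=1}^n` is a
`k`-sandwiching sequence for `m`, with sandwiching values `(ms i)_{i=0}^n`:
`ms 0 = 0`; for each `i < n`, `A_{a (i+1)} (ms i) ≤ m < A_{a (i+1) + 1} (ms i)`,
`A_{a (i+1)} (b (i+1)) ≤ m < A_{a (i+1)} (b (i+1) + 1)`, and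
`ms (i+1) = A_{a (i+1)} (b (i+1))`; and `A_0 (ms n) > m`. -/
structure IsSandwich (k m n : ℕ) (a b ms : ℕ → ℕ) : Prop where
  ms_zero : ms 0 = 0
  idx_lo : ∀ i < n, Ack k (a (i + 1)) (ms i) ≤ m
  idx_hi : ∀ i < n, m < Ack k (a (i + 1) + 1) (ms i)
  arg_lo : ∀ i < n, Ack k (a (i + 1)) (b (i + 1)) ≤ m
  arg_hi : ∀ i < n, m < Ack k (a (i + 1)) (b (i + 1) + 1)
  ms_succ : ∀ i < n, ms (i + 1) = Ack k (a (i + 1)) (b (i + 1))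
  halt : m < Ack k 0 (ms n)

theorem Ack_lt_iter {f : ℕ → ℕ} (hf : ∀ x, x < f x) (j x : ℕ) : x + j ≤ f^[j] x := by
  induction j with
  | zero => simp
  | succ j ih =>
    rw [Function.iterate_succ_apply']
    have := hf (f^[j] x)
    omega

theorem Ack_good (k : ℕ) (hk : 2 ≤ k) (a : ℕ) :
    StrictMono (Ack k a) ∧ ∀ x, x < Ack k a x := by
  induction a with
  | zero =>
    constructor
    · intro x y h
      simp only [Ack]
      exact Nat.pow_lt_pow_right (by omega) h
    · intro x
      simp only [Ack]
      exact Nat.lt_pow_self (by omega)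
  | succ a ih =>
    have hg : ∀ x, x < (Ack k a)^[k] x := fun x => by
      have := Ack_lt_iter ih.2 k x
      omega
    constructor
    · apply strictMono_nat_of_lt_succ
      intro b
      simp only [Ack]
      rw [Function.iterate_succ_apply' _ (b + 1)]
      exact hg _
    · intro x
      simp only [Ack]
      have := Ack_lt_iter hg (x + 1) 1
      omega

theorem Ack_succ_succ (k a b : ℕ) :
    Ack k (a + 1) (b + 1) = (Ack k a)^[k] (Ack k (a + 1) b) := by
  simp only [Ack]
  rw [Function.iterate_succ_apply' _ (b + 1)]

theorem Ack_iter_split (k : ℕ) (hk : 2 ≤ k) (f : ℕ → ℕ) (x : ℕ) :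
    f^[k] x = f (f^[k - 1] x) := by
  obtain ⟨j, rfl⟩ : ∃ j, k = j + 1 := ⟨k - 1, by omega⟩
  rw [Function.iterate_succ_apply', Nat.add_sub_cancel]

theorem Ack_mono_idx (k : ℕ) (hk : 2 ≤ k) (x : ℕ) : Monotone (fun a => Ack k a x) := by
  apply monotone_nat_of_le_succ
  intro a
  have hg := Ack_good k hk a
  cases x with
  | zero =>
    have : Ack k (a + 1) 0 = (Ack k a)^[k] 1 := by simp only [Ack]; rfl
    rw [this, Ack_iter_split k hk]
    exact hg.1.monotone (Nat.zero_le _)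
  | succ b =>
    rw [Ack_succ_succ, Ack_iter_split k hk]
    apply hg.1.monotone
    have h1 := Ack_lt_iter hg.2 (k - 1) (Ack k (a + 1) b)
    have h2 := (Ack_good k hk (a + 1)).2 b
    omega

theorem stmt_2 (k m n : ℕ) (a b ms : ℕ → ℕ) (hk : 2 ≤ k) (hm : 0 < m)
    (hs : IsSandwich k m n a b ms) :
    ∀ i, 1 ≤ i → i < n →
      b (i + 1) <
        min ((Ack k (a (i + 1)))^[k - 1] (Ack k (a (i + 1) + 1) (ms i - 1)))
          ((Ack k (a i - 1))^[k - 1] (ms i)) ∧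
      Ack k (a (i + 1)) (b (i + 1) + 1) ≤ Ack k (a (i + 1) + 1) (ms i) ∧
      Ack k (a (i + 1)) (b (i + 1) + 1) ≤ Ack k (a i) (b i + 1) := by
  intro i hi hin
  obtain ⟨j, rfl⟩ : ∃ j, i = j + 1 := ⟨i - 1, by omega⟩
  have hM := hs.ms_succ j (by omega)
  have hup := hs.arg_hi j (by omega)
  have h1 := hs.idx_lo (j + 1) hin
  have h2 := hs.idx_hi (j + 1) hin
  have h3 := hs.arg_lo (j + 1) hin
  generalize ms (j + 1) = M at *
  generalize a (j + 1 + 1) = a' at *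
  generalize b (j + 1 + 1) = b' at *
  generalize a (j + 1) = c at *
  generalize b (j + 1) = d at *
  have gc := Ack_good k hk c
  have ga := Ack_good k hk a'
  have hdM : d < M := hM ▸ gc.2 d
  have hac : a' < c := by
    by_contra hcon
    have e1 : Ack k c M ≤ Ack k a' M := Ack_mono_idx k hk M (by omega : c ≤ a')
    have e2 : Ack k c (d + 1) ≤ Ack k c M := gc.1.monotone hdM
    omega
  obtain ⟨c, rfl⟩ : ∃ e, c = e + 1 := ⟨c - 1, by omega⟩
  obtain ⟨N, rfl⟩ : ∃ N, M = N + 1 := ⟨M - 1, by omega⟩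
  have gc' := Ack_good k hk c
  rw [Nat.add_sub_cancel, Nat.add_sub_cancel]
  rw [Ack_succ_succ, Ack_iter_split k hk] at h2
  rw [Ack_succ_succ, Ack_iter_split k hk, ← hM] at hup
  have p1 : b' < (Ack k a')^[k - 1] (Ack k (a' + 1) N) :=
    ga.1.lt_iff_lt.1 (lt_of_le_of_lt h3 h2)
  have p2 : b' < (Ack k c)^[k - 1] (N + 1) := by
    by_cases h : a' + 1 ≤ c
    · have e2 : Ack k (a' + 1) (N + 1) ≤ Ack k c (N + 1) := Ack_mono_idx k hk (N + 1) h
      rw [Ack_succ_succ, Ack_iter_split k hk] at e2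
      have e3 := ga.2 b'
      obtain ⟨l, hl⟩ : ∃ l, k - 1 = l + 1 := ⟨k - 2, by omega⟩
      have e4 := Ack_lt_iter gc'.2 l (Ack k c (N + 1))
      rw [hl, Function.iterate_succ_apply]
      omega
    · obtain rfl : a' = c := by omega
      exact gc'.1.lt_iff_lt.1 (lt_of_le_of_lt h3 hup)
  refine ⟨lt_min p1 p2, ?_, ?_⟩
  · rw [Ack_succ_succ, Ack_iter_split k hk]
    exact ga.1.monotone p1
  · rw [Ack_succ_succ, Ack_iter_split k hk, ← hM]
    exact le_trans (Ack_mono_idx k hk (b' + 1) (by omega : a' ≤ c)) (gc'.1.monotone p2)
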